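/- Let k be continuous on [a,b]×[a,b] and g ∈ C([a,b]). The following two statements are equivalent: (A) there exists a unique w ∈ C([a,b]) satisfying w = P_N^RZ(g + V_N^SE[w]); (B) the linear system (E_n^RZ − V_n^RZ)c = g_n^SE has a unique solution c ∈ ℂ^n. Moreover, when these hold, w = w_N^RZ, the Rashidinia–Zarebnia SE-Sinc-collocation solution built from c. -/

import Mathlib

/-! The solutions `w` of `w = P_N^RZ (g + V_N^SE[w])` and the solutions `c` of
`(E_n^RZ - V_n^RZ) c = g_n^SE` correspond bijectively under `c ↦ w_c` (`wRZf`), which gives the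
equivalence of unique solvability and the formula for `w`.

The values of `w_c` at the nodes are `E_n^RZ c` (`EnRZ_mulVec`, since `S(j,h)(ih) = δ_{ij}`), and
those of `V_N^SE[w_c]` are `V_n^RZ c` (`VnRZ_mulVec`). Hence the linear system says that `w_c`
agrees with `f = g + V_N^SE[w_c]` at all `2N+1` nodes. Since `Δ_N ≠ 0`, interpolation in the span of
the trial functions is uniquely solvable, and the interpolant of `f` is `P_N^RZ f`
(`interp_iff`, `PNRZ_eq_wRZf`); so the system is equivalent to `w_c = P_N^RZ f`. Conversely, any
solution `w` lies in the range of `P_N^RZ`, so it equals some `w_c` on `[a,b]`, and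
`V_N^SE[w] = V_N^SE[w_c]` because `V_N^SE` only uses node values (`exists_coef_of_BpredRZ`). The
map `c ↦ w_c` is injective because node values determine `c` (`wRZf_injOn`).

Continuity of `w_c` up to the endpoints comes from the decay of the sinc function at `±∞`
(`continuousOn_sincExt`). -/

namespace SincVolterra

noncomputable section

/-- The sine integral `Si(x) = ∫₀ˣ (sin τ)/τ dτ`. -/
def Si (x : ℝ) : ℝ := ∫ τ in (0:ℝ)..x, Real.sin τ / τ

/-- The Sinc function `S(j,h)(x)`. -/
def sincF (j : ℤ) (h x : ℝ) : ℝ :=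
  if x = (j : ℝ) * h then 1
  else Real.sin (Real.pi * (x - (j : ℝ) * h) / h) / (Real.pi * (x - (j : ℝ) * h) / h)

/-- `J(j,h)(x) = h (1/2 + (1/π) Si(π(x - jh)/h))`. -/
def Jfun (j : ℤ) (h x : ℝ) : ℝ :=
  h * (1/2 + (1/Real.pi) * Si (Real.pi * (x - (j : ℝ) * h) / h))

/-- The tanh (SE) transformation. -/
def psiSE (a b x : ℝ) : ℝ := (b - a)/2 * Real.tanh (x/2) + (b + a)/2

/-- The inverse of the SE transformation. -/
def phiSE (a b t : ℝ) : ℝ := Real.log ((t - a)/(b - t))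

/-- The double-exponential (DE) transformation. -/
def psiDE (a b x : ℝ) : ℝ := (b - a)/2 * Real.tanh (Real.pi/2 * Real.sinh x) + (b + a)/2

/-- The inverse of the DE transformation. -/
def phiDE (a b t : ℝ) : ℝ := Real.arsinh (1/Real.pi * Real.log ((t - a)/(b - t)))

/-- The SE transformation as a complex map. -/
def psiSEC (a b : ℝ) (z : ℂ) : ℂ :=
  (((b : ℂ) - (a : ℂ))/2) * Complex.tanh (z/2) + ((b : ℂ) + (a : ℂ))/2

/-- The DE transformation as a complex map. -/
def psiDEC (a b : ℝ) (z : ℂ) : ℂ :=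
  (((b : ℂ) - (a : ℂ))/2) * Complex.tanh (((Real.pi : ℂ))/2 * Complex.sinh z) + ((b : ℂ) + (a : ℂ))/2

/-- The strip `D_d = {ζ : |Im ζ| < d}`. -/
def Dstrip (d : ℝ) : Set ℂ := {z : ℂ | |z.im| < d}

/-- `D = ψ^SE(D_d)`. -/
def DSE (a b d : ℝ) : Set ℂ := psiSEC a b '' Dstrip d

def omA (a b t : ℝ) : ℝ := (b - t)/(b - a)

def omB (a b t : ℝ) : ℝ := (t - a)/(b - a)

/-- The SE collocation points `t_j^SE = ψ^SE(jh)`. -/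
def tSE (a b h : ℝ) (j : ℤ) : ℝ := psiSE a b ((j : ℝ) * h)

/-- The DE collocation points `t_j^DE = ψ^DE(jh)`. -/
def tDE (a b h : ℝ) (j : ℤ) : ℝ := psiDE a b ((j : ℝ) * h)

/-- `δ_m^{(-1)} = 1/2 + (1/π) Si(π m)`. -/
def deltaM (m : ℤ) : ℝ := 1/2 + (1/Real.pi) * Si (Real.pi * (m : ℝ))

/-- `J(j,h)(φ^SE(t))`, extended continuously to `t = a` (value 0) and `t = b` (value h). -/
def JSEext (a b h : ℝ) (j : ℤ) (t : ℝ) : ℝ :=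
  if t ≤ a then 0 else if b ≤ t then h else Jfun j h (phiSE a b t)

/-- `J(j,h)(φ^DE(t))`, extended continuously to `t = a` (value 0) and `t = b` (value h). -/
def JDEext (a b h : ℝ) (j : ℤ) (t : ℝ) : ℝ :=
  if t ≤ a then 0 else if b ≤ t then h else Jfun j h (phiDE a b t)

/-- The operator `V_N^SE`, with the continuous extension to `t = a, b` built in. -/
def VNSE (a b h : ℝ) (N : ℕ) (k : ℝ → ℝ → ℂ) (f : ℝ → ℂ) (t : ℝ) : ℂ :=
  ∑ j ∈ Finset.Icc (-(N:ℤ)) (N:ℤ),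
    k t (tSE a b h j) * f (tSE a b h j) * ((deriv (psiSE a b) ((j : ℝ) * h) : ℝ) : ℂ)
      * ((JSEext a b h j t : ℝ) : ℂ)

/-- The operator `V_N^DE`, with the continuous extension to `t = a, b` built in. -/
def VNDE (a b h : ℝ) (N : ℕ) (k : ℝ → ℝ → ℂ) (f : ℝ → ℂ) (t : ℝ) : ℂ :=
  ∑ j ∈ Finset.Icc (-(N:ℤ)) (N:ℤ),
    k t (tDE a b h j) * f (tDE a b h j) * ((deriv (psiDE a b) ((j : ℝ) * h) : ℝ) : ℂ)
      * ((JDEext a b h j t : ℝ) : ℂ)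

/-- The generalized SE-Sinc approximation operator `P_N^SE`. -/
def PNSE (a b h : ℝ) (N : ℕ) (f : ℝ → ℂ) (t : ℝ) : ℂ :=
  if t ≤ a then f (tSE a b h (-(N:ℤ)))
  else if b ≤ t then f (tSE a b h (N:ℤ))
  else f (tSE a b h (-(N:ℤ))) * ((omA a b t : ℝ) : ℂ) + f (tSE a b h (N:ℤ)) * ((omB a b t : ℝ) : ℂ)
    + ∑ j ∈ Finset.Icc (-(N:ℤ)) (N:ℤ),
        (f (tSE a b h j) - f (tSE a b h (-(N:ℤ))) * ((omA a b (tSE a b h j) : ℝ) : ℂ)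
          - f (tSE a b h (N:ℤ)) * ((omB a b (tSE a b h j) : ℝ) : ℂ))
          * ((sincF j h (phiSE a b t) : ℝ) : ℂ)

/-- The generalized DE-Sinc approximation operator `P_N^DE`. -/
def PNDE (a b h : ℝ) (N : ℕ) (f : ℝ → ℂ) (t : ℝ) : ℂ :=
  if t ≤ a then f (tDE a b h (-(N:ℤ)))
  else if b ≤ t then f (tDE a b h (N:ℤ))
  else f (tDE a b h (-(N:ℤ))) * ((omA a b t : ℝ) : ℂ) + f (tDE a b h (N:ℤ)) * ((omB a b t : ℝ) : ℂ)
    + ∑ j ∈ Finset.Icc (-(N:ℤ)) (N:ℤ),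
        (f (tDE a b h j) - f (tDE a b h (-(N:ℤ))) * ((omA a b (tDE a b h j) : ℝ) : ℂ)
          - f (tDE a b h (N:ℤ)) * ((omB a b (tDE a b h j) : ℝ) : ℂ))
          * ((sincF j h (phiDE a b t) : ℝ) : ℂ)

/-- `Δ_N = ω_a(t_{-N})ω_b(t_N) - ω_b(t_{-N})ω_a(t_N)`. -/
def DeltaN (a b h : ℝ) (N : ℕ) : ℝ :=
  omA a b (tSE a b h (-(N:ℤ))) * omB a b (tSE a b h (N:ℤ))
    - omB a b (tSE a b h (-(N:ℤ))) * omA a b (tSE a b h (N:ℤ))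

def betaN (a b h : ℝ) (N : ℕ) (f : ℝ → ℂ) : ℂ :=
  (f (tSE a b h (-(N:ℤ))) * ((omB a b (tSE a b h (N:ℤ)) : ℝ) : ℂ)
    - f (tSE a b h (N:ℤ)) * ((omB a b (tSE a b h (-(N:ℤ))) : ℝ) : ℂ)) / ((DeltaN a b h N : ℝ) : ℂ)

def gammaN (a b h : ℝ) (N : ℕ) (f : ℝ → ℂ) : ℂ :=
  (f (tSE a b h (N:ℤ)) * ((omA a b (tSE a b h (-(N:ℤ))) : ℝ) : ℂ)
    - f (tSE a b h (-(N:ℤ))) * ((omA a b (tSE a b h (N:ℤ)) : ℝ) : ℂ)) / ((DeltaN a b h N : ℝ) : ℂ)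

/-- The Rashidinia–Zarebnia interpolation operator `P_N^RZ`. -/
def PNRZ (a b h : ℝ) (N : ℕ) (f : ℝ → ℂ) (t : ℝ) : ℂ :=
  if t ≤ a then betaN a b h N f
  else if b ≤ t then gammaN a b h N f
  else betaN a b h N f * ((omA a b t : ℝ) : ℂ) + gammaN a b h N f * ((omB a b t : ℝ) : ℂ)
    + ∑ j ∈ Finset.Icc (-(N:ℤ)+1) ((N:ℤ)-1),
        (f (tSE a b h j) - betaN a b h N f * ((omA a b (tSE a b h j) : ℝ) : ℂ)
          - gammaN a b h N f * ((omB a b (tSE a b h j) : ℝ) : ℂ))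
          * ((sincF j h (phiSE a b t) : ℝ) : ℂ)

/-- Reindexing `Fin (2N+1)` as `{-N, …, N}`. -/
def zidx (N : ℕ) (i : Fin (2*N+1)) : ℤ := ((i : ℕ) : ℤ) - (N : ℤ)

/-- The matrix `V_n^SE`. -/
def VnSE (a b h : ℝ) (N : ℕ) (k : ℝ → ℝ → ℂ) : Matrix (Fin (2*N+1)) (Fin (2*N+1)) ℂ :=
  Matrix.of fun i j =>
    k (tSE a b h (zidx N i)) (tSE a b h (zidx N j))
      * ((deriv (psiSE a b) ((zidx N j : ℝ) * h) : ℝ) : ℂ) * ((h : ℝ) : ℂ)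
      * ((deltaM (zidx N i - zidx N j) : ℝ) : ℂ)

/-- The matrix `V_n^DE`. -/
def VnDE (a b h : ℝ) (N : ℕ) (k : ℝ → ℝ → ℂ) : Matrix (Fin (2*N+1)) (Fin (2*N+1)) ℂ :=
  Matrix.of fun i j =>
    k (tDE a b h (zidx N i)) (tDE a b h (zidx N j))
      * ((deriv (psiDE a b) ((zidx N j : ℝ) * h) : ℝ) : ℂ) * ((h : ℝ) : ℂ)
      * ((deltaM (zidx N i - zidx N j) : ℝ) : ℂ)

/-- The right-hand-side vector `g_n^SE`. -/
def gnSE (a b h : ℝ) (N : ℕ) (g : ℝ → ℂ) : Fin (2*N+1) → ℂ := fun i => g (tSE a b h (zidx N i))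

/-- The right-hand-side vector `g_n^DE`. -/
def gnDE (a b h : ℝ) (N : ℕ) (g : ℝ → ℂ) : Fin (2*N+1) → ℂ := fun i => g (tDE a b h (zidx N i))

/-- The matrix `E_n^RZ`. -/
def EnRZ (a b h : ℝ) (N : ℕ) : Matrix (Fin (2*N+1)) (Fin (2*N+1)) ℂ :=
  Matrix.of fun i j =>
    if (j : ℕ) = 0 then ((omA a b (tSE a b h (zidx N i)) : ℝ) : ℂ)
    else if (j : ℕ) = 2*N then ((omB a b (tSE a b h (zidx N i)) : ℝ) : ℂ)
    else if i = j then 1 else 0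

/-- The matrix `V_n^RZ`. -/
def VnRZ (a b h : ℝ) (N : ℕ) (k : ℝ → ℝ → ℂ) : Matrix (Fin (2*N+1)) (Fin (2*N+1)) ℂ :=
  Matrix.of fun i j =>
    if (j : ℕ) = 0 then VNSE a b h N k (fun t => ((omA a b t : ℝ) : ℂ)) (tSE a b h (zidx N i))
    else if (j : ℕ) = 2*N then VNSE a b h N k (fun t => ((omB a b t : ℝ) : ℂ)) (tSE a b h (zidx N i))
    else k (tSE a b h (zidx N i)) (tSE a b h (zidx N j))
      * ((deriv (psiSE a b) ((zidx N j : ℝ) * h) : ℝ) : ℂ) * ((h : ℝ) : ℂ)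
      * ((deltaM (zidx N i - zidx N j) : ℝ) : ℂ)

/-- The SE-Sinc-Nyström solution `u_N^SE` built from a solution vector `u` of the
linear system, with the continuous extension to the endpoints built in. -/
def uNSEf (a b h : ℝ) (N : ℕ) (k : ℝ → ℝ → ℂ) (g : ℝ → ℂ) (u : Fin (2*N+1) → ℂ) (t : ℝ) : ℂ :=
  g t + ∑ i : Fin (2*N+1),
    k t (tSE a b h (zidx N i)) * u i * ((deriv (psiSE a b) ((zidx N i : ℝ) * h) : ℝ) : ℂ)
      * ((JSEext a b h (zidx N i) t : ℝ) : ℂ)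

/-- The DE-Sinc-Nyström solution `u_N^DE` built from a solution vector `u` of the
linear system, with the continuous extension to the endpoints built in. -/
def uNDEf (a b h : ℝ) (N : ℕ) (k : ℝ → ℝ → ℂ) (g : ℝ → ℂ) (u : Fin (2*N+1) → ℂ) (t : ℝ) : ℂ :=
  g t + ∑ i : Fin (2*N+1),
    k t (tDE a b h (zidx N i)) * u i * ((deriv (psiDE a b) ((zidx N i : ℝ) * h) : ℝ) : ℂ)
      * ((JDEext a b h (zidx N i) t : ℝ) : ℂ)

/-- The Rashidinia–Zarebnia SE-Sinc-collocation solution `w_N^RZ` built from a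
coefficient vector `c`, with the continuous extension to the endpoints built in. -/
def wRZf (a b h : ℝ) (N : ℕ) (c : Fin (2*N+1) → ℂ) (t : ℝ) : ℂ :=
  if t ≤ a then c ⟨0, by omega⟩
  else if b ≤ t then c ⟨2*N, by omega⟩
  else c ⟨0, by omega⟩ * ((omA a b t : ℝ) : ℂ) + c ⟨2*N, by omega⟩ * ((omB a b t : ℝ) : ℂ)
    + ∑ j ∈ Finset.univ.filter (fun j : Fin (2*N+1) => (j : ℕ) ≠ 0 ∧ (j : ℕ) ≠ 2*N),
        c j * ((sincF (zidx N j) h (phiSE a b t) : ℝ) : ℂ)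

/-- The SE mesh size `h = √(πd/(αN))`. -/
def hstepSE (α d : ℝ) (N : ℕ) : ℝ := Real.sqrt (Real.pi * d / (α * N))

/-- The DE mesh size `h = log(2dN/α)/N`. -/
def hstepDE (α d : ℝ) (N : ℕ) : ℝ := Real.log (2*d*N/α) / N

/-- The RZ-collocation fixed point equation `w = P_N^RZ (g + V_N^SE w)` on `[a,b]`. -/
def BpredRZ (a b h : ℝ) (N : ℕ) (k : ℝ → ℝ → ℂ) (g : ℝ → ℂ) (w : ℝ → ℂ) : Prop :=
  ContinuousOn w (Set.Icc a b) ∧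
    ∀ t ∈ Set.Icc a b, w t = PNRZ a b h N (fun s => g s + VNSE a b h N k w s) t

/-! ### The transformation and the nodes -/

theorem psiSE_eq (a b x : ℝ) :
    psiSE a b x = a + (b - a) * (Real.exp x / (1 + Real.exp x)) := by
  have h1 : Real.exp x = Real.exp (x/2) * Real.exp (x/2) := by
    rw [← Real.exp_add]; ring_nf
  have hp := Real.exp_pos (x/2)
  rw [psiSE, Real.tanh_eq, h1, Real.exp_neg]
  have h2 : Real.exp (x/2) + (Real.exp (x/2))⁻¹ ≠ 0 := by positivity
  have h3 : 1 + Real.exp (x/2) * Real.exp (x/2) ≠ 0 := by positivity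
  field_simp
  ring

theorem tSE_mem {a b : ℝ} (hab : a < b) (h : ℝ) (j : ℤ) : tSE a b h j ∈ Set.Ioo a b := by
  rw [tSE, psiSE_eq]
  have hp := Real.exp_pos ((j : ℝ) * h)
  have h1 : Real.exp ((j : ℝ) * h) / (1 + Real.exp ((j : ℝ) * h)) < 1 := by
    rw [div_lt_one (by positivity)]; linarith
  have h2 : 0 < Real.exp ((j : ℝ) * h) / (1 + Real.exp ((j : ℝ) * h)) := by positivity
  constructor <;> nlinarith

theorem phiSE_tSE {a b : ℝ} (hab : a < b) (h : ℝ) (j : ℤ) :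
    phiSE a b (tSE a b h j) = (j : ℝ) * h := by
  rw [phiSE, tSE, psiSE_eq]
  have hp := Real.exp_pos ((j : ℝ) * h)
  have hba : b - a ≠ 0 := (sub_pos.2 hab).ne'
  have h0 : 1 + Real.exp ((j : ℝ) * h) ≠ 0 := by positivity
  have h1 : b - (a + (b - a) * (Real.exp ((j : ℝ) * h) / (1 + Real.exp ((j : ℝ) * h))))
      = (b - a) / (1 + Real.exp ((j : ℝ) * h)) := by
    field_simp; ring
  rw [h1, add_sub_cancel_left]
  have h2 : (b - a) * (Real.exp ((j : ℝ) * h) / (1 + Real.exp ((j : ℝ) * h)))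
      / ((b - a) / (1 + Real.exp ((j : ℝ) * h))) = Real.exp ((j : ℝ) * h) := by
    field_simp
  rw [h2, Real.log_exp]

/-- `Δ_N = (t_N - t_{-N}) / (b - a)`, which does not vanish because the nodes are distinct. -/
theorem DeltaN_ne_zero {a b h : ℝ} {N : ℕ} (hab : a < b) (hN : 0 < N) (hh : 0 < h) :
    DeltaN a b h N ≠ 0 := by
  have hba : b - a ≠ 0 := (sub_pos.2 hab).ne'
  have h1 : DeltaN a b h N = (tSE a b h (N:ℤ) - tSE a b h (-(N:ℤ))) / (b - a) := by
    simp only [DeltaN, omA, omB]; field_simp; ring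
  rw [h1]
  refine div_ne_zero (fun h0 => ?_) hba
  have h2 := phiSE_tSE hab h (N:ℤ)
  rw [sub_eq_zero.1 h0, phiSE_tSE hab] at h2
  have h3 : (0:ℝ) < N := by exact_mod_cast hN
  push_cast at h2
  nlinarith [mul_pos h3 hh]

/-! ### Sinc functions -/

theorem sincF_eq_sinc (j : ℤ) {h : ℝ} (hh : 0 < h) (x : ℝ) :
    sincF j h x = Real.sinc (Real.pi * (x - (j : ℝ) * h) / h) := by
  have hiff : Real.pi * (x - (j : ℝ) * h) / h = 0 ↔ x = (j : ℝ) * h := by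
    simp [hh.ne', Real.pi_ne_zero, sub_eq_zero]
  simp only [sincF, Real.sinc_apply, hiff]

theorem sincF_node (i j : ℤ) {h : ℝ} (hh : 0 < h) :
    sincF j h ((i : ℝ) * h) = if i = j then 1 else 0 := by
  rw [sincF]
  by_cases hij : i = j
  · simp [hij]
  · have h1 : ¬ ((i : ℝ) * h = (j : ℝ) * h) := by
      simp [hh.ne', hij]
    have h2 : Real.pi * ((i : ℝ) * h - (j : ℝ) * h) / h = ((i - j : ℤ) : ℝ) * Real.pi := by
      push_cast; field_simp
    rw [if_neg h1, if_neg hij, h2, Real.sin_int_mul_pi, zero_div]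

theorem tendsto_sinc_cobounded : Filter.Tendsto Real.sinc (Bornology.cobounded ℝ) (nhds 0) := by
  have h1 : Filter.Tendsto (fun x : ℝ => ‖x‖⁻¹) (Bornology.cobounded ℝ) (nhds 0) :=
    tendsto_inv_atTop_zero.comp tendsto_norm_cobounded_atTop
  refine squeeze_zero_norm' ?_ h1
  filter_upwards [Bornology.eventually_ne_cobounded (0:ℝ)] with x hx
  rw [Real.sinc_of_ne_zero hx, norm_div, div_eq_mul_inv]
  exact mul_le_of_le_one_left (by positivity) (Real.abs_sin_le_one x)

theorem tendsto_sincF (j : ℤ) {h : ℝ} (hh : 0 < h) :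
    Filter.Tendsto (sincF j h) (Bornology.cobounded ℝ) (nhds 0) := by
  have h0 : sincF j h = Real.sinc ∘ fun x => Real.pi * (x - (j : ℝ) * h) / h :=
    funext (sincF_eq_sinc j hh)
  rw [h0]
  refine tendsto_sinc_cobounded.comp ?_
  have hc : 0 < Real.pi / h := div_pos Real.pi_pos hh
  rw [Metric.cobounded_eq_cocompact, cocompact_eq_atBot_atTop]
  have h1 : (fun x : ℝ => Real.pi * (x - (j : ℝ) * h) / h)
      = fun x => (Real.pi / h) * (x + -((j : ℝ) * h)) := by
    funext x; ring
  rw [h1]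
  refine Filter.Tendsto.sup_sup ?_ ?_
  · exact (Filter.tendsto_atBot_add_const_right _ _ Filter.tendsto_id).const_mul_atBot hc
  · exact (Filter.tendsto_atTop_add_const_right _ _ Filter.tendsto_id).const_mul_atTop hc

theorem continuous_sincF (j : ℤ) {h : ℝ} (hh : 0 < h) : Continuous (sincF j h) := by
  have h0 : sincF j h = Real.sinc ∘ fun x => Real.pi * (x - (j : ℝ) * h) / h :=
    funext (sincF_eq_sinc j hh)
  rw [h0]
  exact Real.continuous_sinc.comp (by fun_prop)

theorem tendsto_phiSE_left {a b : ℝ} (hab : a < b) :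
    Filter.Tendsto (phiSE a b) (nhdsWithin a (Set.Ioi a)) Filter.atBot := by
  refine Real.tendsto_log_nhdsGT_zero.comp ?_
  refine tendsto_nhdsWithin_iff.2 ⟨?_, ?_⟩
  · have h1 : ContinuousAt (fun t : ℝ => (t - a) / (b - t)) a :=
      ContinuousAt.div (by fun_prop) (by fun_prop) (sub_pos.2 hab).ne'
    have h2 := h1.tendsto
    simp only [sub_self, zero_div] at h2
    exact h2.mono_left nhdsWithin_le_nhds
  · filter_upwards [Ioo_mem_nhdsGT hab] with t ht
    exact div_pos (sub_pos.2 ht.1) (sub_pos.2 ht.2)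

theorem tendsto_phiSE_right {a b : ℝ} (hab : a < b) :
    Filter.Tendsto (phiSE a b) (nhdsWithin b (Set.Iio b)) Filter.atTop := by
  refine Real.tendsto_log_atTop.comp ?_
  have h1 : Filter.Tendsto (fun t : ℝ => t - a) (nhdsWithin b (Set.Iio b)) (nhds (b - a)) :=
    (Continuous.tendsto (by fun_prop) b).mono_left nhdsWithin_le_nhds
  have h2 : Filter.Tendsto (fun t : ℝ => (b - t)⁻¹) (nhdsWithin b (Set.Iio b)) Filter.atTop := by
    refine tendsto_inv_nhdsGT_zero.comp (tendsto_nhdsWithin_iff.2 ⟨?_, ?_⟩)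
    · have h3 : Filter.Tendsto (fun t : ℝ => b - t) (nhds b) (nhds (b - b)) :=
        Continuous.tendsto (by fun_prop) b
      rw [sub_self] at h3
      exact h3.mono_left nhdsWithin_le_nhds
    · filter_upwards [self_mem_nhdsWithin] with t ht
      exact sub_pos.2 (Set.mem_Iio.1 ht)
  simpa only [div_eq_mul_inv] using h1.pos_mul_atTop (sub_pos.2 hab) h2

/-- `S(j,h)(φ^SE(t))` on `(a,b)`, extended by its limit `0` to the endpoints and beyond. -/
def sincExt (a b h : ℝ) (j : ℤ) (t : ℝ) : ℝ :=
  if t ≤ a then 0 else if b ≤ t then 0 else sincF j h (phiSE a b t)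

theorem sincExt_of_mem {a b : ℝ} (h : ℝ) (j : ℤ) {t : ℝ} (ht : t ∈ Set.Ioo a b) :
    sincExt a b h j t = sincF j h (phiSE a b t) := by
  simp [sincExt, not_le.2 ht.1, not_le.2 ht.2]

theorem continuousOn_sincExt {a b h : ℝ} (hab : a < b) (hh : 0 < h) (j : ℤ) :
    ContinuousOn (sincExt a b h j) (Set.Icc a b) := by
  have hlim := tendsto_sincF j hh
  rw [Metric.cobounded_eq_cocompact, cocompact_eq_atBot_atTop] at hlim
  intro x hx
  rcases hx.1.eq_or_lt with rfl | hax
  · have h1 : ContinuousWithinAt (sincExt a b h j) (insert a (Set.Ioi a)) a := by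
      rw [continuousWithinAt_insert_self, ContinuousWithinAt]
      have h2 : sincExt a b h j a = 0 := by simp [sincExt]
      rw [h2]
      refine ((hlim.mono_left le_sup_left).comp (tendsto_phiSE_left hab)).congr' ?_
      filter_upwards [Ioo_mem_nhdsGT hab] with t ht
      exact (sincExt_of_mem h j ht).symm
    refine h1.mono fun t ht => ?_
    rcases ht.1.eq_or_lt with h2 | h2
    · exact Or.inl h2.symm
    · exact Or.inr h2
  rcases hx.2.eq_or_lt with rfl | hxb
  · have h1 : ContinuousWithinAt (sincExt a x h j) (insert x (Set.Iio x)) x := by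
      rw [continuousWithinAt_insert_self, ContinuousWithinAt]
      have h2 : sincExt a x h j x = 0 := by simp [sincExt]
      rw [h2]
      refine ((hlim.mono_left le_sup_right).comp (tendsto_phiSE_right hab)).congr' ?_
      filter_upwards [Ioo_mem_nhdsLT hab] with t ht
      exact (sincExt_of_mem h j ht).symm
    refine h1.mono fun t ht => ?_
    rcases ht.2.eq_or_lt with h2 | h2
    · exact Or.inl h2
    · exact Or.inr h2
  · have h1 : ContinuousAt (phiSE a b) x := by
      refine ContinuousAt.log (ContinuousAt.div (by fun_prop) (by fun_prop) (sub_pos.2 hxb).ne') ?_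
      exact (div_pos (sub_pos.2 hax) (sub_pos.2 hxb)).ne'
    have h2 : ContinuousAt (fun t => sincF j h (phiSE a b t)) x :=
      (continuous_sincF j hh).continuousAt.comp h1
    refine (h2.congr ?_).continuousWithinAt
    filter_upwards [Ioo_mem_nhds hax hxb] with t ht
    exact (sincExt_of_mem h j ht).symm

/-! ### Index sets -/

/-- The predicate `|j| < N` on indices, in the form in which `wRZf` uses it. -/
abbrev IsInner (N : ℕ) (j : Fin (2*N+1)) : Prop := (j : ℕ) ≠ 0 ∧ (j : ℕ) ≠ 2*N

theorem sum_split {N : ℕ} (hN : 0 < N) (F : Fin (2*N+1) → ℂ) :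
    ∑ j, F j = F ⟨0, by omega⟩ + F ⟨2*N, by omega⟩
      + ∑ j ∈ Finset.univ.filter (fun j : Fin (2*N+1) => (j : ℕ) ≠ 0 ∧ (j : ℕ) ≠ 2*N), F j := by
  rw [← Finset.sum_filter_not_add_sum_filter Finset.univ (IsInner N) F]
  congr 1
  have h1 : Finset.univ.filter (fun j => ¬ IsInner N j)
      = {(⟨0, by omega⟩ : Fin (2*N+1)), ⟨2*N, by omega⟩} := by
    ext j
    simp only [IsInner, Finset.mem_filter, Finset.mem_univ, true_and, Finset.mem_insert,
      Finset.mem_singleton, Fin.ext_iff]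
    omega
  rw [h1, Finset.sum_pair (by simp only [ne_eq, Fin.ext_iff]; omega)]

theorem sum_zidx (N : ℕ) (F : ℤ → ℂ) :
    ∑ j ∈ Finset.Icc (-(N:ℤ)) (N:ℤ), F j = ∑ i : Fin (2*N+1), F (zidx N i) := by
  symm
  refine Finset.sum_bij (fun i _ => zidx N i) ?_ ?_ ?_ (fun _ _ => rfl)
  · intro i _
    have := i.2
    simp only [zidx, Finset.mem_Icc]; omega
  · intro i _ j _ hij
    simp only [zidx] at hij
    exact Fin.ext (by omega)
  · intro z hz
    rw [Finset.mem_Icc] at hz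
    exact ⟨⟨(z + N).toNat, by omega⟩, Finset.mem_univ _, by simp only [zidx]; omega⟩

theorem sum_zidx_inner (N : ℕ) (F : ℤ → ℂ) :
    ∑ j ∈ Finset.Icc (-(N:ℤ)+1) ((N:ℤ)-1), F j
      = ∑ j ∈ Finset.univ.filter (fun j : Fin (2*N+1) => (j : ℕ) ≠ 0 ∧ (j : ℕ) ≠ 2*N),
          F (zidx N j) := by
  symm
  refine Finset.sum_bij (fun i _ => zidx N i) ?_ ?_ ?_ (fun _ _ => rfl)
  · intro i hi
    have := i.2
    simp only [Finset.mem_filter] at hi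
    simp only [zidx, Finset.mem_Icc]; omega
  · intro i _ j _ hij
    simp only [zidx] at hij
    exact Fin.ext (by omega)
  · intro z hz
    rw [Finset.mem_Icc] at hz
    refine ⟨⟨(z + N).toNat, by omega⟩, ?_, by simp only [zidx]; omega⟩
    simp only [Finset.mem_filter, Finset.mem_univ, true_and]; omega

theorem zidx_inj {N : ℕ} {i j : Fin (2*N+1)} : zidx N i = zidx N j ↔ i = j := by
  simp only [zidx, Fin.ext_iff]; omega

/-! ### The trial functions `w_c` and their node values -/

theorem continuousOn_wRZf {a b h : ℝ} {N : ℕ} (hab : a < b) (hh : 0 < h)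
    (c : Fin (2*N+1) → ℂ) : ContinuousOn (wRZf a b h N c) (Set.Icc a b) := by
  have hba : b - a ≠ 0 := (sub_pos.2 hab).ne'
  have h1 : Set.EqOn (wRZf a b h N c) (fun t =>
      c ⟨0, by omega⟩ * ((omA a b t : ℝ) : ℂ) + c ⟨2*N, by omega⟩ * ((omB a b t : ℝ) : ℂ)
      + ∑ j ∈ Finset.univ.filter (fun j : Fin (2*N+1) => (j : ℕ) ≠ 0 ∧ (j : ℕ) ≠ 2*N),
        c j * ((sincExt a b h (zidx N j) t : ℝ) : ℂ)) (Set.Icc a b) := by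
    intro t ht
    rcases ht.1.eq_or_lt with rfl | hat
    · simp [wRZf, sincExt, omA, omB, hba]
    rcases ht.2.eq_or_lt with rfl | htb
    · simp [wRZf, sincExt, omA, omB, hba, not_le.2 hab]
    · simp only [wRZf, sincExt, if_neg (not_le.2 hat), if_neg (not_le.2 htb)]
  refine ContinuousOn.congr ?_ h1
  refine ContinuousOn.add (Continuous.continuousOn ?_) ?_
  · unfold omA omB; fun_prop
  · refine continuousOn_finsetSum _ fun j _ => continuousOn_const.mul ?_
    exact Complex.continuous_ofReal.comp_continuousOn (continuousOn_sincExt hab hh _)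

theorem wRZf_node {a b h : ℝ} {N : ℕ} (hab : a < b) (hh : 0 < h)
    (c : Fin (2*N+1) → ℂ) (i : Fin (2*N+1)) :
    wRZf a b h N c (tSE a b h (zidx N i))
      = c ⟨0, by omega⟩ * ((omA a b (tSE a b h (zidx N i)) : ℝ) : ℂ)
        + c ⟨2*N, by omega⟩ * ((omB a b (tSE a b h (zidx N i)) : ℝ) : ℂ)
        + if IsInner N i then c i else 0 := by
  have hm := tSE_mem hab h (zidx N i)
  rw [wRZf, if_neg (not_le.2 hm.1), if_neg (not_le.2 hm.2)]
  congr 1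
  rw [phiSE_tSE hab, Finset.sum_filter, Finset.sum_eq_single i]
  · rw [sincF_node _ _ hh, if_pos rfl, Complex.ofReal_one, mul_one]
  · intro j _ hj
    simp [sincF_node _ _ hh, zidx_inj, hj.symm]
  · simp

theorem EnRZ_mulVec {a b h : ℝ} {N : ℕ} (hab : a < b) (hN : 0 < N) (hh : 0 < h)
    (c : Fin (2*N+1) → ℂ) (i : Fin (2*N+1)) :
    Matrix.mulVec (EnRZ a b h N) c i = wRZf a b h N c (tSE a b h (zidx N i)) := by
  rw [wRZf_node hab hh, Matrix.mulVec, dotProduct, sum_split hN, Finset.sum_filter,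
    Finset.sum_eq_single i]
  · have h2 : 2 * N ≠ 0 := by omega
    simp only [EnRZ, Matrix.of_apply, if_true, if_neg h2]
    congr 1
    · ring
    · split_ifs with h3 <;> first | rfl | simp_all
  · intro j _ hj
    split_ifs with h3
    · rw [EnRZ, Matrix.of_apply, if_neg h3.1, if_neg h3.2, if_neg hj.symm, zero_mul]
    · rfl
  · simp

theorem JSEext_node {a b h : ℝ} (hab : a < b) (hh : 0 < h) (i j : ℤ) :
    JSEext a b h j (tSE a b h i) = h * deltaM (i - j) := by
  have hm := tSE_mem hab h i
  rw [JSEext, if_neg (not_le.2 hm.1), if_neg (not_le.2 hm.2), phiSE_tSE hab, Jfun, deltaM]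
  have h2 : Real.pi * ((i : ℝ) * h - (j : ℝ) * h) / h = Real.pi * ((i - j : ℤ) : ℝ) := by
    push_cast; field_simp
  rw [h2]

theorem VnRZ_mulVec {a b h : ℝ} {N : ℕ} (hab : a < b) (hN : 0 < N) (hh : 0 < h)
    (k : ℝ → ℝ → ℂ) (c : Fin (2*N+1) → ℂ) (i : Fin (2*N+1)) :
    Matrix.mulVec (VnRZ a b h N k) c i
      = VNSE a b h N k (wRZf a b h N c) (tSE a b h (zidx N i)) := by
  have h2 : 2 * N ≠ 0 := by omega
  rw [Matrix.mulVec, dotProduct, sum_split hN]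
  simp only [VnRZ, Matrix.of_apply, if_true, if_neg h2, VNSE]
  simp only [sum_zidx, wRZf_node hab hh]
  rw [Finset.sum_filter, Finset.sum_mul, Finset.sum_mul, ← Finset.sum_add_distrib,
    ← Finset.sum_add_distrib]
  refine Finset.sum_congr rfl fun j _ => ?_
  rw [JSEext_node hab hh]
  by_cases hj : IsInner N j
  · rw [if_pos hj, if_pos hj, if_neg hj.1, if_neg hj.2]
    push_cast
    ring
  · rw [if_neg hj, if_neg hj]
    ring

/-- `V_N^SE[f]` sees `f` only through its values at the nodes. -/
theorem VNSE_congr {a b h : ℝ} {N : ℕ} (k : ℝ → ℝ → ℂ) {f f' : ℝ → ℂ}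
    (hf : ∀ j : ℤ, f (tSE a b h j) = f' (tSE a b h j)) (t : ℝ) :
    VNSE a b h N k f t = VNSE a b h N k f' t := by
  simp only [VNSE, hf]

/-! ### The interpolation operator -/

/-- The coefficient vector of `P_N^RZ f` in the basis `ω_a, S(j,h) ∘ φ^SE (|j| < N), ω_b`. -/
def coef (a b h : ℝ) (N : ℕ) (f : ℝ → ℂ) (j : Fin (2*N+1)) : ℂ :=
  if (j : ℕ) = 0 then betaN a b h N f
  else if (j : ℕ) = 2*N then gammaN a b h N f
  else f (tSE a b h (zidx N j)) - betaN a b h N f * ((omA a b (tSE a b h (zidx N j)) : ℝ) : ℂ)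
          - gammaN a b h N f * ((omB a b (tSE a b h (zidx N j)) : ℝ) : ℂ)

theorem PNRZ_eq_wRZf {a b h : ℝ} {N : ℕ} (hN : 0 < N) (f : ℝ → ℂ) (t : ℝ) :
    PNRZ a b h N f t = wRZf a b h N (coef a b h N f) t := by
  have h2 : 2 * N ≠ 0 := by omega
  have h0 : coef a b h N f ⟨0, by omega⟩ = betaN a b h N f := by simp [coef]
  have hL : coef a b h N f ⟨2*N, by omega⟩ = gammaN a b h N f := by
    simp [coef, hN.ne']
  rw [PNRZ, wRZf, sum_zidx_inner, h0, hL]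
  congr 3
  refine Finset.sum_congr rfl fun j hj => ?_
  simp only [Finset.mem_filter, Finset.mem_univ, true_and] at hj
  rw [coef, if_neg hj.1, if_neg hj.2]

/-- `w_c` interpolates `f` at the `2N+1` nodes if and only if `c` is the coefficient vector
of `P_N^RZ f`: the two outermost
conditions form a `2 × 2` system with determinant `Δ_N` for the coefficients of `ω_a` and `ω_b`,
and each inner condition then determines its own coefficient. -/
theorem interp_iff {a b h : ℝ} {N : ℕ} (hab : a < b) (hN : 0 < N) (hh : 0 < h)
    (f : ℝ → ℂ) (c : Fin (2*N+1) → ℂ) :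
    (∀ i, wRZf a b h N c (tSE a b h (zidx N i)) = f (tSE a b h (zidx N i)))
      ↔ c = coef a b h N f := by
  have h2 : 2 * N ≠ 0 := by omega
  have hz0 : zidx N ⟨0, by omega⟩ = -(N:ℤ) := by simp [zidx]
  have hzL : zidx N ⟨2*N, by omega⟩ = (N:ℤ) := by simp only [zidx]; push_cast; ring
  have hD : ((DeltaN a b h N : ℝ) : ℂ) ≠ 0 :=
    Complex.ofReal_ne_zero.2 (DeltaN_ne_zero hab hN hh)
  have hDe : ((DeltaN a b h N : ℝ) : ℂ)
      = (omA a b (tSE a b h (-(N:ℤ))) : ℂ) * (omB a b (tSE a b h (N:ℤ)) : ℂ)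
        - (omB a b (tSE a b h (-(N:ℤ))) : ℂ) * (omA a b (tSE a b h (N:ℤ)) : ℂ) := by
    rw [DeltaN]; push_cast; ring
  simp only [wRZf_node hab hh]
  constructor
  · intro H
    have e0 := H ⟨0, by omega⟩
    have eL := H ⟨2*N, by omega⟩
    rw [hz0, if_neg (by simp [IsInner])] at e0
    rw [hzL, if_neg (by simp [IsInner])] at eL
    have c0 : c ⟨0, by omega⟩ = betaN a b h N f := by
      rw [betaN, eq_div_iff hD, hDe, ← e0, ← eL]; ring
    have cL : c ⟨2*N, by omega⟩ = gammaN a b h N f := by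
      rw [gammaN, eq_div_iff hD, hDe, ← e0, ← eL]; ring
    funext j
    rw [coef]
    split_ifs with h3 h4
    · rw [← c0]; congr 1; exact Fin.ext h3
    · rw [← cL]; congr 1; exact Fin.ext h4
    · have ej := H j
      rw [if_pos ⟨h3, h4⟩, c0, cL] at ej
      rw [← ej]; ring
  · rintro rfl i
    have h0 : coef a b h N f ⟨0, by omega⟩ = betaN a b h N f := by simp [coef]
    have hL : coef a b h N f ⟨2*N, by omega⟩ = gammaN a b h N f := by
      simp [coef, hN.ne']
    rw [h0, hL]
    by_cases hi : IsInner N i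
    · rw [if_pos hi, coef, if_neg hi.1, if_neg hi.2]; ring
    · rw [if_neg hi]
      have hcases : i = ⟨0, by omega⟩ ∨ i = ⟨2*N, by omega⟩ := by
        simp only [IsInner] at hi
        simp only [Fin.ext_iff]; omega
      rcases hcases with rfl | rfl
      · rw [hz0, betaN, gammaN]; field_simp; rw [hDe]; ring
      · rw [hzL, betaN, gammaN]; field_simp; rw [hDe]; ring

/-! ### Correspondence of solutions -/

/-- The linear system says that `w_c` interpolates `g + V_N^SE[w_c]` at the nodes; by `interp_iff`
this identifies `c`. -/
theorem system_iff {a b h : ℝ} {N : ℕ} (hab : a < b) (hN : 0 < N) (hh : 0 < h)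
    (k : ℝ → ℝ → ℂ) (g : ℝ → ℂ) (c : Fin (2*N+1) → ℂ) :
    Matrix.mulVec (EnRZ a b h N - VnRZ a b h N k) c = gnSE a b h N g
      ↔ c = coef a b h N (fun s => g s + VNSE a b h N k (wRZf a b h N c) s) := by
  rw [← interp_iff hab hN hh, funext_iff]
  refine forall_congr' fun i => ?_
  rw [Matrix.sub_mulVec, Pi.sub_apply, EnRZ_mulVec hab hN hh, VnRZ_mulVec hab hN hh, gnSE,
    sub_eq_iff_eq_add]

theorem BpredRZ_wRZf {a b h : ℝ} {N : ℕ} (hab : a < b) (hN : 0 < N) (hh : 0 < h)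
    {k : ℝ → ℝ → ℂ} {g : ℝ → ℂ} {c : Fin (2*N+1) → ℂ}
    (hc : Matrix.mulVec (EnRZ a b h N - VnRZ a b h N k) c = gnSE a b h N g) :
    BpredRZ a b h N k g (wRZf a b h N c) := by
  refine ⟨continuousOn_wRZf hab hh c, fun t _ => ?_⟩
  rw [PNRZ_eq_wRZf hN, ← (system_iff hab hN hh k g c).1 hc]

theorem exists_coef_of_BpredRZ {a b h : ℝ} {N : ℕ} (hab : a < b) (hN : 0 < N) (hh : 0 < h)
    {k : ℝ → ℝ → ℂ} {g w : ℝ → ℂ} (hw : BpredRZ a b h N k g w) :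
    ∃ c : Fin (2*N+1) → ℂ,
      Matrix.mulVec (EnRZ a b h N - VnRZ a b h N k) c = gnSE a b h N g ∧
      Set.EqOn w (wRZf a b h N c) (Set.Icc a b) := by
  have heq : Set.EqOn w
      (wRZf a b h N (coef a b h N fun s => g s + VNSE a b h N k w s)) (Set.Icc a b) :=
    fun t ht => by rw [hw.2 t ht, PNRZ_eq_wRZf hN]
  refine ⟨_, (system_iff hab hN hh k g _).2 ?_, heq⟩
  have hV := fun s => VNSE_congr (N := N) k
    (fun j => heq (Set.Ioo_subset_Icc_self (tSE_mem hab h j))) s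
  exact congrArg (coef a b h N) (funext fun s => congrArg (g s + ·) (hV s))

theorem wRZf_injOn {a b h : ℝ} {N : ℕ} (hab : a < b) (hN : 0 < N) (hh : 0 < h)
    {c c' : Fin (2*N+1) → ℂ}
    (hcc : Set.EqOn (wRZf a b h N c) (wRZf a b h N c') (Set.Icc a b)) : c = c' := by
  have h1 := (interp_iff hab hN hh (wRZf a b h N c') c).1
    fun i => hcc (Set.Ioo_subset_Icc_self (tSE_mem hab h _))
  have h2 := (interp_iff hab hN hh (wRZf a b h N c') c').1 fun i => rfl
  rw [h1, ← h2]

/-- equivalence of unique solvability of the RZ collocation equation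
and of the RZ linear system, and `w = w_N^RZ`. -/
theorem RZ_collocation_linear_system_equiv
    (a b h : ℝ) (N : ℕ) (hab : a < b) (hN : 0 < N) (hh : 0 < h)
    (k : ℝ → ℝ → ℂ) (g : ℝ → ℂ)
    (hk : ContinuousOn (Function.uncurry k) (Set.Icc a b ×ˢ Set.Icc a b))
    (hg : ContinuousOn g (Set.Icc a b)) :
    ((∃ w, BpredRZ a b h N k g w ∧
        ∀ w', BpredRZ a b h N k g w' → Set.EqOn w' w (Set.Icc a b)) ↔
      (∃! c : Fin (2*N+1) → ℂ,
        Matrix.mulVec (EnRZ a b h N - VnRZ a b h N k) c = gnSE a b h N g)) ∧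
    (∀ w (c : Fin (2*N+1) → ℂ), BpredRZ a b h N k g w →
      (∀ w', BpredRZ a b h N k g w' → Set.EqOn w' w (Set.Icc a b)) →
      Matrix.mulVec (EnRZ a b h N - VnRZ a b h N k) c = gnSE a b h N g →
      Set.EqOn w (wRZf a b h N c) (Set.Icc a b)) := by
  refine ⟨⟨?_, ?_⟩, ?_⟩
  · rintro ⟨w, hw, huniq⟩
    obtain ⟨c, hc, hwc⟩ := exists_coef_of_BpredRZ hab hN hh hw
    refine ⟨c, hc, fun c' hc' => wRZf_injOn hab hN hh ?_⟩
    exact (huniq _ (BpredRZ_wRZf hab hN hh hc')).trans hwc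
  · rintro ⟨c, hc, huniq⟩
    refine ⟨wRZf a b h N c, BpredRZ_wRZf hab hN hh hc, fun w' hw' => ?_⟩
    obtain ⟨c', hc', hwc'⟩ := exists_coef_of_BpredRZ hab hN hh hw'
    rwa [huniq c' hc'] at hwc'
  · intro w c _ huniq hc
    exact (huniq _ (BpredRZ_wRZf hab hN hh hc)).symm

end

end SincVolterra
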